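/- arXiv:1508.07408 — 2 statements merged into one kernel-verified Lean document; each statement's English description precedes it below -/
import Mathlib

section
/- Let α ≥ 1, ν = (1−α)/2 and λ > 0, and define y : (0,∞) → ℝ by y(x) = x^ν · J_{−ν}(x·√λ). Then y is twice differentiable on (0,∞), satisfies (x^α · y'(x))' + λ · x^α · y(x) = 0 for all x ∈ (0,1), y(x) tends to the finite limit (√λ/2)^{−ν}/Γ(1−ν) as x → 0+, and y'(x) → 0 as x → 0+ (so y is bounded in a neighbourhood of the origin and satisfies the boundary condition y'(0) = 0). -/
/-- The Bessel function of the first kind of real order `μ`,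
`J_μ(x) = ∑ (−1)^m/(m!·Γ(m+μ+1))·(x/2)^{2m+μ}` (terms with `Γ` at nonpositive
integers vanish, since `Real.Gamma` vanishes there). -/
noncomputable def besselJ (μ x : ℝ) : ℝ :=
  ∑' m : ℕ, ((-1 : ℝ) ^ m / ((m.factorial : ℝ) * Real.Gamma ((m : ℝ) + μ + 1))) *
    (x / 2) ^ (2 * (m : ℝ) + μ)

/-!
In terms of the entire function `C_μ(z) = ∑ z^m / (m! Γ(m+μ+1))`, the function
`x^(-μ) J_μ(s x)` is, on `x > 0`, the even entire function `R_μ(x) = (s/2)^μ C_μ(-s²x²/4)`.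
The coefficients of `C_μ` give `C_μ' = C_{μ+1}` and `C_μ = (μ+1) C_{μ+1} + z C_{μ+2}`, which become
`R_μ' = -s x R_{μ+1}` and `(x^(2μ+2) R_{μ+1})' = s x^(2μ+1) R_μ`. Composing these two first-order
relations with `α = 2μ+1` gives the differential equation; the limits at the origin are the values
of `R_μ` and `R_μ'` at `0`.
-/

open Filter Set Topology

theorem inv_Gamma_eq_mul_inv_Gamma_add_one (x : ℝ) :
    (Real.Gamma x)⁻¹ = x * (Real.Gamma (x + 1))⁻¹ := by
  rcases eq_or_ne x 0 with rfl | hx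
  · simp [Real.Gamma_zero]
  · rw [Real.Gamma_add_one hx, mul_inv, mul_inv_cancel_left₀ hx]

theorem rpow_add_two_eq_rpow_add_one_mul {x : ℝ} (hx : x ≠ 0) (p : ℝ) :
    x ^ (p + 2) = x ^ (p + 1) * x := by
  rw [← Real.rpow_add_one hx, add_assoc, one_add_one_eq_two]

/-- The coefficient `1 / (m! Γ(m+μ+1))` of the Bessel–Clifford function. Since `Real.Gamma` vanishes
at its poles and `0⁻¹ = 0`, it is the entire function `1/Γ` that enters here, for every real `μ`. -/
noncomputable def besselCliffordCoeff (μ : ℝ) (m : ℕ) : ℝ :=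
  (m.factorial : ℝ)⁻¹ * (Real.Gamma (m + μ + 1))⁻¹

/-- The Bessel–Clifford function `C_μ(z) = ∑ z^m / (m! Γ(m+μ+1))`: the entire function for which
`J_μ(x) = (x/2)^μ C_μ(-x²/4)`. -/
noncomputable def besselClifford (μ z : ℝ) : ℝ :=
  ∑' m : ℕ, besselCliffordCoeff μ m * z ^ m

theorem besselCliffordCoeff_eq_mul_add_one (μ : ℝ) (m : ℕ) :
    besselCliffordCoeff μ m = (m + μ + 1) * besselCliffordCoeff (μ + 1) m := by
  rw [besselCliffordCoeff, besselCliffordCoeff, inv_Gamma_eq_mul_inv_Gamma_add_one, ← add_assoc]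
  ring

theorem besselCliffordCoeff_succ_mul (μ : ℝ) (m : ℕ) :
    besselCliffordCoeff μ (m + 1) * (m + 1 : ℕ) = besselCliffordCoeff (μ + 1) m := by
  have harg : ((m + 1 : ℕ) : ℝ) + μ + 1 = m + (μ + 1) + 1 := by push_cast; ring
  rw [besselCliffordCoeff, besselCliffordCoeff, harg, Nat.factorial_succ]
  push_cast
  field_simp

theorem besselCliffordCoeff_eq_mul_succ (μ : ℝ) (m : ℕ) :
    besselCliffordCoeff μ m = (m + μ + 1) * (m + 1) * besselCliffordCoeff μ (m + 1) := by
  rw [besselCliffordCoeff_eq_mul_add_one, ← besselCliffordCoeff_succ_mul]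
  push_cast
  ring

theorem summable_besselClifford (μ z : ℝ) :
    Summable fun m : ℕ => besselCliffordCoeff μ m * z ^ m := by
  have hlarge : ∀ᶠ m : ℕ in atTop, 2 * |z| ≤ (m + μ + 1) * (m + 1) := by
    have hlin (c : ℝ) : Tendsto (fun m : ℕ => (m : ℝ) + c) atTop atTop :=
      tendsto_atTop_add_const_right _ c tendsto_natCast_atTop_atTop
    simpa only [add_assoc] using
      ((hlin (μ + 1)).atTop_mul_atTop₀ (hlin 1)).eventually_ge_atTop (2 * |z|)
  refine summable_of_ratio_norm_eventually_le (r := 1 / 2) (by norm_num) ?_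
  filter_upwards [hlarge] with m hm
  calc ‖besselCliffordCoeff μ (m + 1) * z ^ (m + 1)‖
      = 1 / 2 * (2 * |z| * (|besselCliffordCoeff μ (m + 1)| * |z| ^ m)) := by
        rw [norm_mul, norm_pow, Real.norm_eq_abs, Real.norm_eq_abs, pow_succ]
        ring
    _ ≤ 1 / 2 * (|(m + μ + 1) * (m + 1)| * (|besselCliffordCoeff μ (m + 1)| * |z| ^ m)) := by
        gcongr
        exact hm.trans (le_abs_self _)
    _ = 1 / 2 * ‖besselCliffordCoeff μ m * z ^ m‖ := by
        rw [besselCliffordCoeff_eq_mul_succ μ m, norm_mul, norm_pow, Real.norm_eq_abs,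
          Real.norm_eq_abs, abs_mul (_ * _), mul_assoc]

theorem hasSum_besselClifford (μ z : ℝ) :
    HasSum (fun m : ℕ => besselCliffordCoeff μ m * z ^ m) (besselClifford μ z) :=
  (summable_besselClifford μ z).hasSum

theorem hasSum_besselClifford_deriv (μ z : ℝ) :
    HasSum (fun m : ℕ => besselCliffordCoeff μ m * (m * z ^ (m - 1)))
      (besselClifford (μ + 1) z) := by
  rw [← hasSum_nat_add_iff' 1]
  simpa [← mul_assoc, ← besselCliffordCoeff_succ_mul] using hasSum_besselClifford (μ + 1) z

theorem hasDerivAt_besselClifford (μ z : ℝ) :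
    HasDerivAt (besselClifford μ) (besselClifford (μ + 1) z) z := by
  have hz : z ∈ Metric.ball (0 : ℝ) (|z| + 1) := by simp
  rw [← (hasSum_besselClifford_deriv μ z).tsum_eq]
  refine hasDerivAt_tsum_of_isPreconnected
    (hasSum_besselClifford_deriv μ (|z| + 1)).summable.norm Metric.isOpen_ball
    (convex_ball _ _).isPreconnected (fun m w _ => (hasDerivAt_pow m w).const_mul _)
    (fun m w hw => ?_) hz (summable_besselClifford μ z) hz
  rw [mem_ball_zero_iff] at hw
  simp only [norm_mul, norm_pow]
  gcongr
  exact hw.le.trans (Real.le_norm_self _)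

theorem besselClifford_eq_add (μ z : ℝ) :
    besselClifford μ z =
      (μ + 1) * besselClifford (μ + 1) z + z * besselClifford (μ + 2) z := by
  have hsum := ((hasSum_besselClifford (μ + 1) z).mul_left (μ + 1)).add
    ((hasSum_besselClifford_deriv (μ + 1) z).mul_left z)
  rw [show μ + 2 = μ + 1 + 1 by ring, ← hsum.tsum_eq]
  refine tsum_congr fun m => ?_
  rw [besselCliffordCoeff_eq_mul_add_one]
  rcases m with _ | m
  · simp
  · rw [Nat.add_sub_cancel, pow_succ]
    ring

theorem besselClifford_zero (μ : ℝ) : besselClifford μ 0 = (Real.Gamma (μ + 1))⁻¹ := by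
  rw [besselClifford, tsum_eq_single 0 fun m hm => by simp [hm]]
  simp [besselCliffordCoeff]

theorem besselJ_eq_rpow_mul_besselClifford (μ : ℝ) {x : ℝ} (hx : 0 < x) :
    besselJ μ x = (x / 2) ^ μ * besselClifford μ (-(x / 2) ^ 2) := by
  rw [besselJ, besselClifford, ← tsum_mul_left]
  refine tsum_congr fun m => ?_
  have hpow : (x / 2) ^ (2 * (m : ℝ) + μ) = ((x / 2) ^ 2) ^ m * (x / 2) ^ μ := by
    rw [Real.rpow_add (by positivity), ← pow_mul, ← Real.rpow_natCast, Nat.cast_mul, Nat.cast_ofNat]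
  rw [hpow, neg_pow ((x / 2) ^ 2), besselCliffordCoeff, div_eq_mul_inv, mul_inv]
  ring

/-- For `s > 0`, the function `R_μ(x) = (s/2)^μ C_μ(-(s x/2)²)` extends `x ↦ x^(-μ) J_μ(x s)` from
`x > 0` to a smooth even function on `ℝ`. -/
noncomputable def regularBessel (μ s x : ℝ) : ℝ :=
  (s / 2) ^ μ * besselClifford μ (-(x * s / 2) ^ 2)

section regularBessel

variable {s : ℝ} (μ : ℝ)

theorem eqOn_rpow_neg_mul_besselJ_regularBessel (hs : 0 < s) :
    EqOn (fun x => x ^ (-μ) * besselJ μ (x * s)) (regularBessel μ s) (Ioi 0) := by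
  intro x (hx : 0 < x)
  have hcancel : x ^ (-μ) * (x * s / 2) ^ μ = (s / 2) ^ μ := by
    rw [mul_div_assoc, Real.mul_rpow hx.le (by positivity), ← mul_assoc, ← Real.rpow_add hx,
      neg_add_cancel, Real.rpow_zero, one_mul]
  simp only [regularBessel]
  rw [besselJ_eq_rpow_mul_besselClifford μ (mul_pos hx hs), ← mul_assoc, hcancel]

theorem regularBessel_zero_right :
    regularBessel μ s 0 = (s / 2) ^ μ / Real.Gamma (μ + 1) := by
  simp [regularBessel, besselClifford_zero, div_eq_mul_inv]

theorem hasDerivAt_regularBessel (hs : s ≠ 0) (x : ℝ) :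
    HasDerivAt (regularBessel μ s) (-s * x * regularBessel (μ + 1) s x) x := by
  have hinner : HasDerivAt (fun x => -(x * s / 2) ^ 2) (-(s ^ 2 / 2) * x) x := by
    convert! ((((hasDerivAt_id x).mul_const s).div_const 2).pow 2).neg using 1
    simp only [Nat.cast_ofNat, id_eq, Nat.add_one_sub_one, pow_one, one_mul]
    ring
  convert! ((hasDerivAt_besselClifford μ _).comp x hinner).const_mul ((s / 2) ^ μ) using 1
  rw [regularBessel, Real.rpow_add_one (by positivity)]
  ring

theorem differentiable_regularBessel (hs : s ≠ 0) : Differentiable ℝ (regularBessel μ s) :=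
  fun x => (hasDerivAt_regularBessel μ hs x).differentiableAt

theorem deriv_regularBessel (hs : s ≠ 0) :
    deriv (regularBessel μ s) = fun x => -s * x * regularBessel (μ + 1) s x :=
  funext fun x => (hasDerivAt_regularBessel μ hs x).deriv

theorem differentiable_deriv_regularBessel (hs : s ≠ 0) :
    Differentiable ℝ (deriv (regularBessel μ s)) := by
  rw [deriv_regularBessel μ hs]
  exact (differentiable_id.const_mul _).mul (differentiable_regularBessel (μ + 1) hs)

theorem mul_regularBessel_eq_sub (hs : s ≠ 0) (x : ℝ) :
    s * regularBessel μ s x =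
      2 * (μ + 1) * regularBessel (μ + 1) s x - s * x ^ 2 * regularBessel (μ + 2) s x := by
  have hs2 : s / 2 ≠ 0 := by positivity
  have hpow : (s / 2) ^ (μ + 2) = (s / 2) ^ μ * (s / 2) ^ 2 :=
    mod_cast Real.rpow_add_natCast hs2 μ 2
  simp only [regularBessel]
  rw [besselClifford_eq_add, hpow, Real.rpow_add_one hs2]
  ring

theorem hasDerivAt_rpow_mul_regularBessel (hs : s ≠ 0) {x : ℝ} (hx : x ≠ 0) :
    HasDerivAt (fun x => x ^ (2 * μ + 2) * regularBessel (μ + 1) s x)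
      (s * x ^ (2 * μ + 1) * regularBessel μ s x) x := by
  convert! (Real.hasDerivAt_rpow_const (p := 2 * μ + 2) (Or.inl hx)).mul
    (hasDerivAt_regularBessel (μ + 1) hs x) using 1
  have hexp : 2 * μ + 2 - 1 = 2 * μ + 1 := by ring
  rw [hexp, rpow_add_two_eq_rpow_add_one_mul hx, add_assoc μ, one_add_one_eq_two]
  linear_combination x ^ (2 * μ + 1) * mul_regularBessel_eq_sub μ hs x

theorem deriv_rpow_mul_deriv_regularBessel (hs : s ≠ 0) {x : ℝ} (hx : 0 < x) :
    deriv (fun x => x ^ (2 * μ + 1) * deriv (regularBessel μ s) x) x =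
      -(s ^ 2 * x ^ (2 * μ + 1) * regularBessel μ s x) := by
  have hflux : EqOn (fun x => x ^ (2 * μ + 1) * deriv (regularBessel μ s) x)
      (fun x => -s * (x ^ (2 * μ + 2) * regularBessel (μ + 1) s x)) (Ioi 0) := by
    intro x (hx : 0 < x)
    simp only [deriv_regularBessel μ hs, rpow_add_two_eq_rpow_add_one_mul hx.ne']
    ring
  rw [hflux.deriv isOpen_Ioi hx,
    ((hasDerivAt_rpow_mul_regularBessel μ hs hx.ne').const_mul (-s)).deriv]
  ring

end regularBessel

-- At `α = -1, -3, …` the limit is `0`, which is the value of the entire function `1/Γ` there.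
theorem bounded_solution_pos_lambda_general (α lam : ℝ) (hlam : 0 < lam) :
    let ν : ℝ := (1 - α) / 2
    let y : ℝ → ℝ := fun x => x ^ ν * besselJ (-ν) (x * Real.sqrt lam)
    (∀ x > (0 : ℝ), DifferentiableAt ℝ y x) ∧
    (∀ x > (0 : ℝ), DifferentiableAt ℝ (deriv y) x) ∧
    (∀ x > (0 : ℝ), deriv (fun x : ℝ => x ^ α * deriv y x) x + lam * x ^ α * y x = 0) ∧
    Tendsto y (𝓝[>] 0) (𝓝 ((Real.sqrt lam / 2) ^ (-ν) / Real.Gamma (1 - ν))) ∧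
    Tendsto (deriv y) (𝓝[>] 0) (𝓝 0) := by
  intro ν y
  have hs : 0 < √lam := Real.sqrt_pos.2 hlam
  have hy : EqOn y (regularBessel (-ν) √lam) (Ioi 0) := by
    simpa only [neg_neg] using eqOn_rpow_neg_mul_besselJ_regularBessel (-ν) hs
  have hy' : EqOn (deriv y) (deriv (regularBessel (-ν) √lam)) (Ioi 0) := hy.deriv isOpen_Ioi
  have hR := differentiable_regularBessel (-ν) hs.ne'
  have hR' := differentiable_deriv_regularBessel (-ν) hs.ne'
  refine ⟨fun x hx => (hR x).congr_of_eventuallyEq (hy.eventuallyEq_of_mem (Ioi_mem_nhds hx)),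
    fun x hx => (hR' x).congr_of_eventuallyEq (hy'.eventuallyEq_of_mem (Ioi_mem_nhds hx)),
    fun x hx => ?_, ?_, ?_⟩
  · have hflux : EqOn (fun x => x ^ α * deriv y x)
        (fun x => x ^ α * deriv (regularBessel (-ν) √lam) x) (Ioi 0) :=
      fun z hz => congrArg (z ^ α * ·) (hy' hz)
    have hα : α = 2 * -ν + 1 := by simp only [ν]; ring
    rw [hflux.deriv isOpen_Ioi hx, hy hx, hα, deriv_rpow_mul_deriv_regularBessel (-ν) hs.ne' hx,
      Real.sq_sqrt hlam.le, neg_add_cancel]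
  · rw [show 1 - ν = -ν + 1 by ring, ← regularBessel_zero_right]
    exact (hR.continuous.tendsto' 0 _ rfl |>.mono_left nhdsWithin_le_nhds).congr'
      (hy.symm.eventuallyEq_of_mem self_mem_nhdsWithin)
  · exact (hR'.continuous.tendsto' 0 0 (by simp [deriv_regularBessel (-ν) hs.ne'])
      |>.mono_left nhdsWithin_le_nhds).congr' (hy'.symm.eventuallyEq_of_mem self_mem_nhdsWithin)

/-- For `α ≥ 1`, `ν = (1−α)/2` and `λ > 0`, the function `y(x) = x^ν·J_{−ν}(x√λ)`
is twice differentiable on `(0,∞)`, satisfies `(x^α y')' + λ x^α y = 0` on `(0,1)`,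
tends to `(√λ/2)^{−ν}/Γ(1−ν)` as `x → 0⁺`, and `y'(x) → 0` as `x → 0⁺`. -/
theorem bounded_solution_pos_lambda (α lam : ℝ) (hα : 1 ≤ α) (hlam : 0 < lam) :
    let ν : ℝ := (1 - α) / 2
    let y : ℝ → ℝ := fun x => x ^ ν * besselJ (-ν) (x * Real.sqrt lam)
    (∀ x > (0 : ℝ), DifferentiableAt ℝ y x) ∧
    (∀ x > (0 : ℝ), DifferentiableAt ℝ (deriv y) x) ∧
    (∀ x ∈ Set.Ioo (0 : ℝ) 1,
      deriv (fun x : ℝ => x ^ α * deriv y x) x + lam * x ^ α * y x = 0) ∧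
    Filter.Tendsto y (nhdsWithin 0 (Set.Ioi 0))
      (nhds ((Real.sqrt lam / 2) ^ (-ν) / Real.Gamma (1 - ν))) ∧
    Filter.Tendsto (deriv y) (nhdsWithin 0 (Set.Ioi 0)) (nhds 0) := by
  obtain ⟨hy, hy', hode, hlim, hlim'⟩ := bounded_solution_pos_lambda_general α lam hlam
  exact ⟨hy, hy', fun x hx => hode x hx.1, hlim, hlim'⟩
end

section
/- Let α ≥ 1, set ν = (1−α)/2, and let λ < 0. Then for all real numbers r, s with 0 < r ≤ s ≤ 1, r^ν · (K_ν(s·√|λ|)·I_{−ν}(r·√|λ|) − I_{−ν}(s·√|λ|)·K_ν(r·√|λ|)) ≤ 0. -/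
/-- The modified Bessel function of the first kind of real order `μ`. -/
noncomputable def besselI (μ x : ℝ) : ℝ :=
  ∑' m : ℕ, (1 / ((m.factorial : ℝ) * Real.Gamma ((m : ℝ) + μ + 1))) *
    (x / 2) ^ (2 * (m : ℝ) + μ)

/-- The modified Bessel function of the second kind of real order `μ`,
`K_μ(x) = ∫_0^∞ e^{−x·cosh t}·cosh(μt) dt`. -/
noncomputable def besselK (μ x : ℝ) : ℝ :=
  ∫ t in Set.Ioi (0 : ℝ), Real.exp (-(x * Real.cosh t)) * Real.cosh (μ * t)

/-!
For order `μ ≥ 0` every term of the series of `I_μ` is nonnegative and increasing in `x > 0`, while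
the integrand of `K_ν` is nonnegative and decreasing in `x`. Hence `I_μ` increases and `K_ν`
decreases on `(0, ∞)`, and the products `K_ν(y) I_μ(x) ≤ K_ν(x) I_μ(y)` compare factor by factor
for `x ≤ y`. Convergence comes from comparison with the exponential series and with a Gaussian.
-/

open Filter MeasureTheory Real Set

/-- The `m`-th term of the power series defining `besselI μ x`. It vanishes where `m + μ + 1` is a
nonpositive integer, because there `Real.Gamma` is `0` and so is its inverse. -/
noncomputable def besselITerm (μ x : ℝ) (m : ℕ) : ℝ :=
  (1 / ((m.factorial : ℝ) * Gamma ((m : ℝ) + μ + 1))) * (x / 2) ^ (2 * (m : ℝ) + μ)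

theorem besselITerm_nonneg {μ x : ℝ} (hμ : -1 ≤ μ) (hx : 0 ≤ x) (m : ℕ) :
    0 ≤ besselITerm μ x m := by
  have hGamma : 0 ≤ Gamma (m + μ + 1) :=
    Gamma_nonneg_of_nonneg (by linarith [m.cast_nonneg (α := ℝ)])
  unfold besselITerm
  positivity

theorem monotoneOn_besselITerm {μ : ℝ} (hμ : 0 ≤ μ) (m : ℕ) :
    MonotoneOn (fun x => besselITerm μ x m) (Ici 0) := by
  intro x (hx : 0 ≤ x) y _ hxy
  simp only [besselITerm]
  gcongr

theorem besselITerm_eq_pow_mul {x : ℝ} (hx : 0 < x) (μ : ℝ) (m : ℕ) :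
    besselITerm μ x m =
      ((x / 2) ^ 2) ^ m / m.factorial * (x / 2) ^ μ / Gamma (m + μ + 1) := by
  have hpow : (x / 2) ^ (2 * (m : ℝ)) = ((x / 2) ^ 2) ^ m := by
    rw [rpow_mul (by positivity), rpow_two, rpow_natCast]
  rw [besselITerm, rpow_add (by positivity), hpow]
  ring

theorem one_le_Gamma {t : ℝ} (ht : 2 ≤ t) : 1 ≤ Gamma t :=
  Gamma_two ▸ Gamma_strictMonoOn_Ici.monotoneOn self_mem_Ici ht ht

theorem summable_besselITerm {x : ℝ} (hx : 0 < x) (μ : ℝ) : Summable (besselITerm μ x) := by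
  have hexp : Summable fun m : ℕ => ((x / 2) ^ 2) ^ m / m.factorial * (x / 2) ^ μ :=
    (summable_pow_div_factorial _).mul_right _
  refine hexp.of_norm_bounded_eventually_nat ?_
  filter_upwards [eventually_ge_atTop ⌈1 - μ⌉₊] with m hm
  have hGamma : 1 ≤ Gamma (m + μ + 1) := one_le_Gamma (by linarith [Nat.ceil_le.mp hm])
  rw [besselITerm_eq_pow_mul hx, norm_of_nonneg (by positivity)]
  exact div_le_self (by positivity) hGamma

theorem besselI_nonneg {μ x : ℝ} (hμ : -1 ≤ μ) (hx : 0 ≤ x) : 0 ≤ besselI μ x :=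
  tsum_nonneg (besselITerm_nonneg hμ hx)

theorem monotoneOn_besselI {μ : ℝ} (hμ : 0 ≤ μ) : MonotoneOn (besselI μ) (Ioi 0) :=
  fun _ hx _ hy hxy => Summable.tsum_le_tsum
    (fun m => monotoneOn_besselITerm hμ m (Ioi_subset_Ici_self hx) (Ioi_subset_Ici_self hy) hxy)
    (summable_besselITerm hx μ) (summable_besselITerm hy μ)

theorem one_add_sq_div_two_le_cosh (t : ℝ) : 1 + t ^ 2 / 2 ≤ cosh t := by
  have hpartial := sum_le_hasSum (Finset.range 2)
    (fun n _ => div_nonneg (even_two_mul n |>.pow_nonneg t) (Nat.cast_nonneg _)) (hasSum_cosh t)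
  simpa [Finset.sum_range_succ] using hpartial

theorem cosh_le_exp_abs (t : ℝ) : cosh t ≤ exp |t| := by
  rw [cosh_eq]
  linarith [exp_le_exp.mpr (le_abs_self t), exp_le_exp.mpr (neg_le_abs t)]

theorem exp_neg_mul_cosh_mul_cosh_le {x : ℝ} (hx : 0 < x) (ν t : ℝ) :
    exp (-(x * cosh t)) * cosh (ν * t) ≤ exp (ν ^ 2 / x) * exp (-(x / 4) * t ^ 2) := by
  have hcosh : x * (t ^ 2 / 2) ≤ x * cosh t := by
    gcongr
    linarith [one_add_sq_div_two_le_cosh t]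
  have hsquare : ν ^ 2 / x - |ν * t| + x / 4 * t ^ 2 = (|ν| - x * |t| / 2) ^ 2 / x := by
    rw [abs_mul, ← sq_abs ν, ← sq_abs t]
    field_simp
    ring
  have hsquare_nonneg : 0 ≤ (|ν| - x * |t| / 2) ^ 2 / x := by positivity
  calc exp (-(x * cosh t)) * cosh (ν * t)
      ≤ exp (-(x * cosh t)) * exp |ν * t| := by gcongr; exact cosh_le_exp_abs _
    _ = exp (-(x * cosh t) + |ν * t|) := (exp_add _ _).symm
    _ ≤ exp (ν ^ 2 / x + -(x / 4) * t ^ 2) := exp_le_exp.mpr (by linarith)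
    _ = exp (ν ^ 2 / x) * exp (-(x / 4) * t ^ 2) := exp_add _ _

theorem integrable_exp_neg_mul_cosh_mul_cosh {x : ℝ} (hx : 0 < x) (ν : ℝ) :
    Integrable fun t => exp (-(x * cosh t)) * cosh (ν * t) := by
  have hgaussian : Integrable fun t => exp (ν ^ 2 / x) * exp (-(x / 4) * t ^ 2) :=
    (integrable_exp_neg_mul_sq (by positivity)).const_mul _
  refine hgaussian.mono' (Continuous.aestronglyMeasurable (by fun_prop)) (.of_forall fun t => ?_)
  rw [norm_of_nonneg (mul_nonneg (exp_pos _).le (cosh_pos _).le)]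
  exact exp_neg_mul_cosh_mul_cosh_le hx ν t

theorem besselK_nonneg (ν x : ℝ) : 0 ≤ besselK ν x :=
  integral_nonneg fun _ => mul_nonneg (exp_pos _).le (cosh_pos _).le

theorem antitoneOn_besselK (ν : ℝ) : AntitoneOn (besselK ν) (Ioi 0) := by
  intro x hx y hy hxy
  refine integral_mono (integrable_exp_neg_mul_cosh_mul_cosh hy ν).integrableOn
    (integrable_exp_neg_mul_cosh_mul_cosh hx ν).integrableOn fun t => ?_
  dsimp only
  gcongr

theorem besselIK_combination_nonpos_general {μ x y : ℝ} (ν : ℝ) (hμ : 0 ≤ μ) (hx : 0 < x)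
    (hxy : x ≤ y) :
    besselK ν y * besselI μ x - besselI μ y * besselK ν x ≤ 0 := by
  have hy : 0 < y := hx.trans_le hxy
  have hK : besselK ν y ≤ besselK ν x := antitoneOn_besselK ν hx hy hxy
  have hI : besselI μ x ≤ besselI μ y := monotoneOn_besselI hμ hx hy hxy
  rw [sub_nonpos, mul_comm (besselI μ y)]
  exact mul_le_mul hK hI (besselI_nonneg (by linarith) hx.le) (besselK_nonneg ν x)

/-- **Lemma 3.6.** For `α ≥ 1`, `ν = (1−α)/2` and `λ < 0`, one has
`r^ν·(K_ν(s√|λ|)·I_{−ν}(r√|λ|) − I_{−ν}(s√|λ|)·K_ν(r√|λ|)) ≤ 0` for `0 < r ≤ s ≤ 1`. -/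
theorem besselIK_combination_nonpos (α lam ν : ℝ) (hα : 1 ≤ α)
    (hν : ν = (1 - α) / 2) (hlam : lam < 0) :
    ∀ r s : ℝ, 0 < r → r ≤ s → s ≤ 1 →
      r ^ ν * (besselK ν (s * Real.sqrt |lam|) * besselI (-ν) (r * Real.sqrt |lam|)
        - besselI (-ν) (s * Real.sqrt |lam|) * besselK ν (r * Real.sqrt |lam|)) ≤ 0 := by
  intro r s hr hrs _
  have hsqrt : 0 < Real.sqrt |lam| := Real.sqrt_pos.mpr (abs_pos.mpr hlam.ne)
  exact mul_nonpos_of_nonneg_of_nonpos (Real.rpow_nonneg hr.le ν)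
    (besselIK_combination_nonpos_general ν (by linarith) (by positivity) (by gcongr))
end
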